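/- Let π: O(G) → O(H) be a surjective morphism of Hopf algebras with O(G) cosemisimple. Then the antipode S of O(G) satisfies S(ker π) = ker π, and consequently π is left-normal if and only if it is right-normal. -/

import Mathlib

/- Common infrastructure: right comodules over coalgebras, simplicity,
cosemisimplicity, subcoalgebras, adjoint coactions, normality, etc. -/

open TensorProduct

universe u

namespace QG

variable (k : Type u) [Field k]

section Coalg

variable (C : Type u) [AddCommGroup C] [Module k C] [Coalgebra k C]

/-- `ρ : V →ₗ[k] V ⊗[k] C` is a (coassociative, counital) right coaction. -/
structure IsComod {V : Type u} [AddCommGroup V] [Module k V]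
    (ρ : V →ₗ[k] V ⊗[k] C) : Prop where
  coassoc : ∀ v : V, ρ.rTensor C (ρ v) =
    (TensorProduct.assoc k V C C).symm.toLinearMap
      ((Coalgebra.comul (R := k) (A := C)).lTensor V (ρ v))
  counit : ∀ v : V, (TensorProduct.rid k V)
      ((Coalgebra.counit (R := k) (A := C)).lTensor V (ρ v)) = v

/-- A submodule `U ≤ V` is a subcomodule if the coaction restricts to it,
i.e. maps `U` into the image of `U ⊗ C` in `V ⊗ C`. -/
def IsSubcomod {V : Type u} [AddCommGroup V] [Module k V]
    (ρ : V →ₗ[k] V ⊗[k] C) (U : Submodule k V) : Prop :=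
  ∀ u ∈ U, ρ u ∈ LinearMap.range ((U.subtype).rTensor C)

/-- A simple subcomodule: a nonzero subcomodule with no nonzero proper
subcomodules below it. -/
def IsSimpleSubcomod {V : Type u} [AddCommGroup V] [Module k V]
    (ρ : V →ₗ[k] V ⊗[k] C) (U : Submodule k V) : Prop :=
  IsSubcomod k C ρ U ∧ U ≠ ⊥ ∧
    ∀ U' : Submodule k V, U' ≤ U → IsSubcomod k C ρ U' → U' = ⊥ ∨ U' = U

/-- A comodule is simple if it is simple as a subcomodule of itself. -/
def IsSimpleComod {V : Type u} [AddCommGroup V] [Module k V]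
    (ρ : V →ₗ[k] V ⊗[k] C) : Prop :=
  IsSimpleSubcomod k C ρ ⊤

/-- Morphisms of right `C`-comodules. -/
def IsComodHom {V W : Type u} [AddCommGroup V] [Module k V]
    [AddCommGroup W] [Module k W]
    (ρV : V →ₗ[k] V ⊗[k] C) (ρW : W →ₗ[k] W ⊗[k] C) (f : V →ₗ[k] W) : Prop :=
  ρW ∘ₗ f = (f.rTensor C) ∘ₗ ρV

/-- `C` is cosemisimple: every right `C`-comodule is an (internal) direct sum
of simple subcomodules. -/
def IsCosemisimple : Prop :=
  ∀ (V : Type u) [AddCommGroup V] [Module k V]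
    (ρ : V →ₗ[k] V ⊗[k] C), IsComod k C ρ →
    ∃ (ι : Type u) (U : ι → Submodule k V),
      (∀ i, IsSimpleSubcomod k C ρ (U i)) ∧
      iSupIndep U ∧ (⨆ i, U i) = ⊤

/-- Subcoalgebras of `C`, as submodules. -/
def IsSubcoalgebra (D : Submodule k C) : Prop :=
  ∀ x ∈ D, Coalgebra.comul (R := k) x ∈
    LinearMap.range (TensorProduct.map D.subtype D.subtype)

/-- Simple subcoalgebras: nonzero ones with no nonzero proper subcoalgebras. -/
def IsSimpleSubcoalgebra (D : Submodule k C) : Prop :=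
  IsSubcoalgebra k C D ∧ D ≠ ⊥ ∧
    ∀ D' : Submodule k C, D' ≤ D → IsSubcoalgebra k C D' → D' = ⊥ ∨ D' = D

/-- The coefficient space of a comodule: the smallest submodule `D ≤ C` such
that the coaction factors through `V ⊗ D`.  For a simple comodule this is its
coefficient coalgebra. -/
def coeffSpace {V : Type u} [AddCommGroup V] [Module k V]
    (ρ : V →ₗ[k] V ⊗[k] C) : Submodule k C :=
  sInf {D : Submodule k C | ∀ v : V, ρ v ∈ LinearMap.range ((D.subtype).lTensor V)}

/-- Corestriction of a coaction along a linear map of coalgebras `π : C → D`. -/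
noncomputable def cores {D : Type u} [AddCommGroup D] [Module k D]
    {V : Type u} [AddCommGroup V] [Module k V]
    (π : C →ₗ[k] D) (ρ : V →ₗ[k] V ⊗[k] C) : V →ₗ[k] V ⊗[k] D :=
  (π.lTensor V) ∘ₗ ρ

end Coalg

section Bialg

variable (H : Type u) [Ring H] [Bialgebra k H]

/-- An invariant vector for a coaction of a bialgebra. -/
def IsInvariant {V : Type u} [AddCommGroup V] [Module k V]
    (ρ : V →ₗ[k] V ⊗[k] H) (v : V) : Prop :=
  ρ v = v ⊗ₜ[k] (1 : H)

/-- The tensor product coaction on `V ⊗ W` for a bialgebra `H`: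
`v ⊗ w ↦ (v₀ ⊗ w₀) ⊗ v₁w₁`. -/
noncomputable def tensorCoact {V W : Type u}
    [AddCommGroup V] [Module k V] [AddCommGroup W] [Module k W]
    (ρV : V →ₗ[k] V ⊗[k] H) (ρW : W →ₗ[k] W ⊗[k] H) :
    (V ⊗[k] W) →ₗ[k] (V ⊗[k] W) ⊗[k] H :=
  ((LinearMap.mul' k H).lTensor (V ⊗[k] W)) ∘ₗ
    (TensorProduct.tensorTensorTensorComm k V H W H).toLinearMap ∘ₗ
    (TensorProduct.map ρV ρW)

/-- `O(G/H)`: the right coinvariants `{x | (id ⊗ π)Δ(x) = x ⊗ 1}` of a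
quotient map `π`. -/
noncomputable def quotientSpaceLeft {B : Type u} [AddCommGroup B] [Module k B] [One B]
    (π : H →ₗ[k] B) : Submodule k H :=
  LinearMap.ker ((π.lTensor H) ∘ₗ (Coalgebra.comul (R := k) (A := H)) -
    (TensorProduct.mk k H B).flip 1)

/-- `O(H\G)`: the left coinvariants `{x | (π ⊗ id)Δ(x) = 1 ⊗ x}`. -/
noncomputable def quotientSpaceRight {B : Type u} [AddCommGroup B] [Module k B] [One B]
    (π : H →ₗ[k] B) : Submodule k H :=
  LinearMap.ker ((π.rTensor H) ∘ₗ (Coalgebra.comul (R := k) (A := H)) -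
    (TensorProduct.mk k B H) 1)

end Bialg

section Hopf

variable (H : Type u) [Ring H] [HopfAlgebra k H]

/-- Iterated comultiplication `x ↦ x₁ ⊗ (x₂ ⊗ x₃)`. -/
noncomputable def comul2 : H →ₗ[k] H ⊗[k] (H ⊗[k] H) :=
  ((Coalgebra.comul (R := k) (A := H)).lTensor H) ∘ₗ (Coalgebra.comul (R := k) (A := H))

/-- The right adjoint coaction `x ↦ x₂ ⊗ S(x₁)x₃`. -/
noncomputable def adR : H →ₗ[k] H ⊗[k] H :=
  ((LinearMap.mul' k H).lTensor H) ∘ₗ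
    (TensorProduct.assoc k H H H).toLinearMap ∘ₗ
    (((TensorProduct.comm k H H).toLinearMap).rTensor H) ∘ₗ
    (TensorProduct.assoc k H H H).symm.toLinearMap ∘ₗ
    ((HopfAlgebra.antipode (R := k) (A := H)).rTensor (H ⊗[k] H)) ∘ₗ
    comul2 k H

/-- The left adjoint coaction `x ↦ x₁S(x₃) ⊗ x₂` (a left coaction, with the
coacting tensorand on the left). -/
noncomputable def adL : H →ₗ[k] H ⊗[k] H :=
  ((LinearMap.mul' k H).rTensor H) ∘ₗ
    (TensorProduct.assoc k H H H).symm.toLinearMap ∘ₗ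
    (((TensorProduct.comm k H H).toLinearMap).lTensor H) ∘ₗ
    (((HopfAlgebra.antipode (R := k) (A := H)).lTensor H).lTensor H) ∘ₗ
    comul2 k H

variable {B : Type u} [AddCommGroup B] [Module k B]

/-- `π : O(G) → O(H)` is right-normal: it is a morphism of right
`O(G)`-comodules for the right adjoint coaction, i.e. the right adjoint
coaction descends along `π`. -/
def IsRightNormal (π : H →ₗ[k] B) : Prop :=
  ∃ ρ : B →ₗ[k] B ⊗[k] H, ρ ∘ₗ π = (π.rTensor H) ∘ₗ adR k H

/-- `π : O(G) → O(H)` is left-normal: the left adjoint coaction descends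
along `π`. -/
def IsLeftNormal (π : H →ₗ[k] B) : Prop :=
  ∃ lam : B →ₗ[k] H ⊗[k] B, lam ∘ₗ π = (π.lTensor H) ∘ₗ adL k H

end Hopf

end QG

namespace QG

variable (k : Type u) [Field k]

section Coalg2

variable (C : Type u) [AddCommGroup C] [Module k C] [Coalgebra k C]

/-- A bundled simple right `C`-comodule. -/
structure SimpleComodule where
  V : Type u
  [addCommGroup : AddCommGroup V]
  [module : Module k V]
  ρ : V →ₗ[k] V ⊗[k] C
  isComod : IsComod k C ρ
  isSimple : IsSimpleComod k C ρ

attribute [instance] SimpleComodule.addCommGroup SimpleComodule.module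

/-- A simple comodule `(T, ρT)` is a constituent of a comodule `(V, ρV)`
(over a cosemisimple coalgebra) iff there is a nonzero comodule map `T → V`. -/
def IsConstituent {T V : Type u} [AddCommGroup T] [Module k T]
    [AddCommGroup V] [Module k V]
    (ρT : T →ₗ[k] T ⊗[k] C) (ρV : V →ₗ[k] V ⊗[k] C) : Prop :=
  ∃ f : T →ₗ[k] V, f ≠ 0 ∧ IsComodHom k C ρT ρV f

/-- Isomorphism of (simple) comodules. -/
def comodIsoRel (X Y : SimpleComodule k C) : Prop :=
  ∃ e : X.V ≃ₗ[k] Y.V, IsComodHom k C X.ρ Y.ρ e.toLinearMap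

/-- The set `Ĉ` of isomorphism classes of simple right `C`-comodules. -/
def SimpleComodQuot := Quot (comodIsoRel k C)

/-- The isomorphism class of a simple comodule. -/
def SimpleComodule.cls (X : SimpleComodule k C) : SimpleComodQuot k C :=
  Quot.mk _ X

/-- Group-like elements of a coalgebra; these correspond to the
one-dimensional comodules, i.e. to characters. -/
def IsGroupLike (a : C) : Prop :=
  Coalgebra.counit (R := k) (A := C) a = (1 : k) ∧
    Coalgebra.comul (R := k) (A := C) a = a ⊗ₜ[k] a

/-- A linear map `φ : C → Z` out of a coalgebra is central if
`φ(x₁) ⊗ x₂ = φ(x₂) ⊗ x₁`. -/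
def IsCentralMap {Z : Type u} [AddCommGroup Z] [Module k Z] (φ : C →ₗ[k] Z) : Prop :=
  (φ.rTensor C) ∘ₗ (Coalgebra.comul (R := k) (A := C)) =
    (φ.rTensor C) ∘ₗ (TensorProduct.comm k C C).toLinearMap ∘ₗ
      (Coalgebra.comul (R := k) (A := C))

/-- The simple comodule `X` has "central character" `g` with respect to the
quotient map `γ : C → Z`: corestricted along `γ`, the coaction on `X` is a sum
of copies of the character `g`. -/
def HasCentralChar {Z : Type u} [AddCommGroup Z] [Module k Z]
    (γ : C →ₗ[k] Z) (X : SimpleComodule k C) (g : Z) : Prop :=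
  ∀ v : X.V, cores k C γ X.ρ v = v ⊗ₜ[k] g

end Coalg2

/-- The k-span of the set of products `g * a`, `a ∈ Am`; for `Am` a submodule
this is the left ideal generated by `Am`. -/
def leftIdealGen {G : Type u} [Ring G] [Module k G] (Am : Submodule k G) :
    Submodule k G :=
  Submodule.span k {x : G | ∃ g : G, ∃ a ∈ Am, x = g * a}

end QG

/-!
Write `⟨x, c⟩ = h(x S(c))`, where `h` is the right integral with `h(1) = 1` given by
cosemisimplicity: the simple comodule `k1` is a direct summand of the regular comodule, and `h` is
`ε` composed with a comodule projection onto it. The integral property turns into the identity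
`⟨x₁, c⟩ x₂ = S²(c₁) ⟨x, c₂⟩`.

On a finite-dimensional subcoalgebra `D` this form is nondegenerate. Indeed, the identity shows that
its left radical `N` is stable under `x ↦ x₁ f(x₂)`, so `Δ(N) ⊆ N ⊗ D` and therefore, for `x ∈ N`,
`0 = ⟨x₁, x₂⟩ = ε(x)`; but a subspace stable under these maps on which `ε` vanishes is zero.
Hence `S` is injective, and choosing `e ∈ D` with `⟨e, ·⟩ = ε` on `D` gives
`S²(c) = ⟨e₁, c⟩ e₂ ∈ D` for `c ∈ D`. If `K` is a subspace with `S(K) ⊆ K`, such as `ker π`, then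
`S²` is an injective, hence bijective, endomorphism of each `K ∩ D`, so `S(K) = K`.

Finally `adR(S(x))` is the flip of `(S ⊗ S)(adL(x))`, so `S(ker π) = ker π` carries the condition
that `adL` descends along `π` to the same condition for `adR`.
-/

namespace QG

open Coalgebra HopfAlgebra WithConv

section Hit

variable {R C : Type*} [CommSemiring R] [AddCommMonoid C] [Module R C] [Coalgebra R C]

/-- The left action `f ⇀ x = x₁ f(x₂)` of the dual algebra on a coalgebra. Over a field, the
subcoalgebras are the subspaces stable under all `leftHit f` and `rightHit f`. -/
noncomputable def leftHit (f : C →ₗ[R] R) : C →ₗ[R] C :=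
  (TensorProduct.rid R C).toLinearMap ∘ₗ f.lTensor C ∘ₗ comul

/-- The right action `x ↼ f = f(x₁) x₂` of the dual algebra on a coalgebra. -/
noncomputable def rightHit (f : C →ₗ[R] R) : C →ₗ[R] C :=
  (TensorProduct.lid R C).toLinearMap ∘ₗ f.rTensor C ∘ₗ comul

lemma leftHit_apply (f : C →ₗ[R] R) (x : C) :
    leftHit f x = TensorProduct.rid R C (f.lTensor C (comul x)) := rfl

lemma rightHit_apply (f : C →ₗ[R] R) (x : C) :
    rightHit f x = TensorProduct.lid R C (f.rTensor C (comul x)) := rfl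

lemma leftHit_apply_eq_sum (f : C →ₗ[R] R) {x : C} {ι : Type*} (r : Coalgebra.Repr R x ι) :
    leftHit f x = ∑ i ∈ r.index, f (r.right i) • r.left i := by
  simp [leftHit, ← r.eq]

lemma rightHit_apply_eq_sum (f : C →ₗ[R] R) {x : C} {ι : Type*} (r : Coalgebra.Repr R x ι) :
    rightHit f x = ∑ i ∈ r.index, f (r.left i) • r.right i := by
  simp [rightHit, ← r.eq]

lemma leftHit_counit (x : C) : leftHit (counit (R := R)) x = x := by
  simp [leftHit]

lemma rightHit_counit (x : C) : rightHit (counit (R := R)) x = x := by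
  simp [rightHit]

lemma apply_leftHit (f g : C →ₗ[R] R) (x : C) : f (leftHit g x) = g (rightHit f x) := by
  rw [leftHit_apply_eq_sum g (ℛ R x), rightHit_apply_eq_sum f (ℛ R x)]
  simp [mul_comm]

lemma comul_leftHit (f : C →ₗ[R] R) (x : C) :
    comul (leftHit f x) = (leftHit f).lTensor C (comul (R := R) x) := by
  rw [leftHit_apply, leftHit, LinearMap.lTensor_comp_apply, LinearMap.lTensor_comp_apply,
    ← coassoc_apply]
  generalize comul (R := R) x = t
  induction t with
  | zero => simp
  | add s t hs ht => simp only [map_add, hs, ht]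
  | tmul a b =>
    simp only [LinearMap.lTensor_tmul, LinearMap.rTensor_tmul,
      TensorProduct.rid_tmul, map_smul]
    generalize comul (R := R) a = t
    induction t with
    | zero => simp
    | add s t hs ht => simp only [smul_add, TensorProduct.add_tmul, map_add, hs, ht]
    | tmul c d => simp

lemma comul_rightHit (f : C →ₗ[R] R) (x : C) :
    comul (rightHit f x) = (rightHit f).rTensor C (comul (R := R) x) := by
  rw [rightHit_apply, rightHit, LinearMap.rTensor_comp_apply, LinearMap.rTensor_comp_apply,
    ← coassoc_symm_apply]
  generalize comul (R := R) x = t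
  induction t with
  | zero => simp
  | add s t hs ht => simp only [map_add, hs, ht]
  | tmul a b =>
    simp only [LinearMap.lTensor_tmul, LinearMap.rTensor_tmul,
      TensorProduct.lid_tmul, map_smul]
    generalize comul (R := R) b = t
    induction t with
    | zero => simp
    | add s t hs ht => simp only [smul_add, TensorProduct.tmul_add, map_add, hs, ht]
    | tmul c d => simp [TensorProduct.smul_tmul']

lemma leftHit_leftHit (f g : C →ₗ[R] R) (x : C) :
    leftHit f (leftHit g x) = leftHit (f ∘ₗ leftHit g) x := by
  rw [leftHit_apply, comul_leftHit, ← LinearMap.lTensor_comp_apply, ← leftHit_apply]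

lemma rightHit_rightHit (f g : C →ₗ[R] R) (x : C) :
    rightHit f (rightHit g x) = rightHit (f ∘ₗ rightHit g) x := by
  rw [rightHit_apply, comul_rightHit, ← LinearMap.rTensor_comp_apply, ← rightHit_apply]

lemma rightHit_leftHit (f g : C →ₗ[R] R) (x : C) :
    rightHit f (leftHit g x) = leftHit g (rightHit f x) := by
  simp only [rightHit_apply, comul_leftHit]
  generalize comul (R := R) x = t
  induction t with
  | zero => simp
  | add s t hs ht => simp only [map_add, hs, ht]
  | tmul a b => simp

end Hit

section Slice

variable {R V W : Type*} [CommSemiring R] [AddCommMonoid V] [Module R V] [AddCommMonoid W]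
  [Module R W]

lemma tensor_ext_left [Module.Free R V] {t t' : V ⊗[R] W}
    (h : ∀ f : V →ₗ[R] R, TensorProduct.lid R W (f.rTensor W t) =
      TensorProduct.lid R W (f.rTensor W t')) : t = t' := by
  classical
  let b := Module.Free.chooseBasis R V
  refine (TensorProduct.equivFinsuppOfBasisLeft b).injective (Finsupp.ext fun i ↦ ?_)
  simpa only [TensorProduct.equivFinsuppOfBasisLeft_apply] using h (b.coord i)

lemma tensor_ext_right [Module.Free R W] {t t' : V ⊗[R] W}
    (h : ∀ g : W →ₗ[R] R, TensorProduct.rid R V (g.lTensor V t) =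
      TensorProduct.rid R V (g.lTensor V t')) : t = t' := by
  classical
  let b := Module.Free.chooseBasis R W
  refine (TensorProduct.equivFinsuppOfBasisRight b).injective (Finsupp.ext fun i ↦ ?_)
  simpa only [TensorProduct.equivFinsuppOfBasisRight_apply] using h (b.coord i)

lemma lid_rTensor_map {V' W' : Type*} [AddCommMonoid V'] [Module R V'] [AddCommMonoid W']
    [Module R W'] (f : V' →ₗ[R] R) (p : V →ₗ[R] V') (q : W →ₗ[R] W') (t : V ⊗[R] W) :
    TensorProduct.lid R W' (f.rTensor W' (TensorProduct.map p q t)) =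
      q (TensorProduct.lid R W ((f ∘ₗ p).rTensor W t)) := by
  induction t with
  | zero => simp
  | add s t hs ht => simp only [map_add, hs, ht]
  | tmul a b => simp

lemma rid_lTensor_map {V' W' : Type*} [AddCommMonoid V'] [Module R V'] [AddCommMonoid W']
    [Module R W'] (g : W' →ₗ[R] R) (p : V →ₗ[R] V') (q : W →ₗ[R] W') (t : V ⊗[R] W) :
    TensorProduct.rid R V' (g.lTensor V' (TensorProduct.map p q t)) =
      p (TensorProduct.rid R V ((g ∘ₗ q).lTensor V t)) := by
  induction t with
  | zero => simp
  | add s t hs ht => simp only [map_add, hs, ht]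
  | tmul a b => simp

end Slice

lemma mem_range_map_subtype {K V W : Type*} [Field K] [AddCommGroup V] [Module K V]
    [AddCommGroup W] [Module K W] {M : Submodule K V} {N : Submodule K W} {t : V ⊗[K] W}
    (hM : ∀ g : W →ₗ[K] K, TensorProduct.rid K V (g.lTensor V t) ∈ M)
    (hN : ∀ f : V →ₗ[K] K, TensorProduct.lid K W (f.rTensor W t) ∈ N) :
    t ∈ LinearMap.range (TensorProduct.map M.subtype N.subtype) := by
  obtain ⟨p, hp⟩ := M.subtype.exists_leftInverse_of_injective M.ker_subtype
  obtain ⟨q, hq⟩ := N.subtype.exists_leftInverse_of_injective N.ker_subtype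
  have p_fixes : (M.subtype ∘ₗ p).rTensor W t = t := tensor_ext_right fun g ↦ by
    rw [LinearMap.rTensor, rid_lTensor_map, LinearMap.comp_id, LinearMap.comp_apply]
    exact congr(($hp ⟨_, hM g⟩ : V))
  have q_fixes : (N.subtype ∘ₗ q).lTensor V t = t := tensor_ext_left fun f ↦ by
    rw [LinearMap.lTensor, lid_rTensor_map, LinearMap.comp_id, LinearMap.comp_apply]
    exact congr(($hq ⟨_, hN f⟩ : W))
  refine ⟨TensorProduct.map p q t, ?_⟩
  rw [← LinearMap.comp_apply, ← TensorProduct.map_comp, ← LinearMap.rTensor_comp_lTensor,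
    LinearMap.comp_apply, q_fixes, p_fixes]

section Subcoalgebra

variable {k C : Type u} [Field k] [AddCommGroup C] [Module k C] [Coalgebra k C]
  {D : Submodule k C}

lemma isSubcoalgebra_of_hit_mem (hl : ∀ f : C →ₗ[k] k, ∀ x ∈ D, leftHit f x ∈ D)
    (hr : ∀ f : C →ₗ[k] k, ∀ x ∈ D, rightHit f x ∈ D) : IsSubcoalgebra k C D :=
  fun x hx ↦ mem_range_map_subtype (fun g ↦ hl g x hx) (fun f ↦ hr f x hx)

lemma IsSubcoalgebra.leftHit_mem (hD : IsSubcoalgebra k C D) (f : C →ₗ[k] k) {x : C}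
    (hx : x ∈ D) : leftHit f x ∈ D := by
  obtain ⟨t, ht⟩ := hD x hx
  rw [leftHit_apply, ← ht, rid_lTensor_map]
  exact Subtype.prop _

lemma IsSubcoalgebra.rightHit_mem (hD : IsSubcoalgebra k C D) (f : C →ₗ[k] k) {x : C}
    (hx : x ∈ D) : rightHit f x ∈ D := by
  obtain ⟨t, ht⟩ := hD x hx
  rw [rightHit_apply, ← ht, lid_rTensor_map]
  exact Subtype.prop _

lemma IsSubcoalgebra.leftHit_congr (hD : IsSubcoalgebra k C D) {f g : C →ₗ[k] k}
    (hfg : Set.EqOn f g D) {x : C} (hx : x ∈ D) : leftHit f x = leftHit g x := by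
  obtain ⟨t, ht⟩ := hD x hx
  have : f ∘ₗ D.subtype = g ∘ₗ D.subtype := LinearMap.ext fun d ↦ hfg d.2
  rw [leftHit_apply, leftHit_apply, ← ht, rid_lTensor_map, rid_lTensor_map, this]

end Subcoalgebra

section HitSpan

variable {R C : Type*} [CommSemiring R] [AddCommMonoid C] [Module R C] [Coalgebra R C]

lemma exists_fg_rightHit_mem (x : C) :
    ∃ F : Submodule R C, F.FG ∧ ∀ f : C →ₗ[R] R, rightHit f x ∈ F := by
  classical
  refine ⟨Submodule.span R ((ℛ R x).index.image (ℛ R x).right),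
    Submodule.fg_span (Finset.finite_toSet _), fun f ↦ ?_⟩
  rw [rightHit_apply_eq_sum f (ℛ R x)]
  exact Submodule.sum_mem _ fun i hi ↦ Submodule.smul_mem _ _ <|
    Submodule.subset_span <| Finset.mem_image_of_mem _ hi

variable (R) in
/-- The span of all `g ⇀ x ↼ f`; over a field, this is the subcoalgebra generated by `x`. -/
noncomputable def hitSpan (x : C) : Submodule R C :=
  Submodule.span R {y | ∃ f g : C →ₗ[R] R, rightHit f (leftHit g x) = y}

lemma mem_hitSpan_self (x : C) : x ∈ hitSpan R x :=
  Submodule.subset_span ⟨counit, counit, by rw [leftHit_counit, rightHit_counit]⟩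

lemma rightHit_mem_hitSpan (f : C →ₗ[R] R) {x y : C} (hy : y ∈ hitSpan R x) :
    rightHit f y ∈ hitSpan R x := by
  suffices hitSpan R x ≤ (hitSpan R x).comap (rightHit f) from this hy
  refine Submodule.span_le.2 ?_
  rintro _ ⟨f', g, rfl⟩
  exact Submodule.subset_span ⟨_, g, (rightHit_rightHit f f' _).symm⟩

lemma leftHit_mem_hitSpan (g : C →ₗ[R] R) {x y : C} (hy : y ∈ hitSpan R x) :
    leftHit g y ∈ hitSpan R x := by
  suffices hitSpan R x ≤ (hitSpan R x).comap (leftHit g) from this hy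
  refine Submodule.span_le.2 ?_
  rintro _ ⟨f, g', rfl⟩
  exact Submodule.subset_span ⟨f, _, by rw [← leftHit_leftHit, rightHit_leftHit]⟩

lemma exists_fg_hitSpan_le (x : C) : ∃ F : Submodule R C, F.FG ∧ hitSpan R x ≤ F := by
  choose F hF hmem using exists_fg_rightHit_mem (R := R) (C := C)
  refine ⟨⨆ i ∈ (ℛ R x).index, F ((ℛ R x).left i),
    Submodule.fg_biSup _ _ fun i _ ↦ hF _, Submodule.span_le.2 ?_⟩
  rintro _ ⟨f, g, rfl⟩
  rw [leftHit_apply_eq_sum g (ℛ R x), map_sum]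
  refine Submodule.sum_mem _ fun i hi ↦ ?_
  rw [map_smul]
  exact Submodule.smul_mem _ _ <|
    Submodule.mem_iSup_of_mem i <| Submodule.mem_iSup_of_mem hi (hmem _ f)

end HitSpan

lemma exists_finiteDimensional_isSubcoalgebra {k C : Type u} [Field k] [AddCommGroup C]
    [Module k C] [Coalgebra k C] (x : C) :
    ∃ D : Submodule k C, FiniteDimensional k D ∧ x ∈ D ∧ IsSubcoalgebra k C D := by
  obtain ⟨F, hF, hle⟩ := exists_fg_hitSpan_le (R := k) x
  have : FiniteDimensional k F := Module.Finite.of_fg hF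
  exact ⟨hitSpan k x, Submodule.finiteDimensional_of_le hle, mem_hitSpan_self x,
    isSubcoalgebra_of_hit_mem (fun g _ ↦ leftHit_mem_hitSpan g)
      (fun f _ ↦ rightHit_mem_hitSpan f)⟩

section Antipode

variable {R A : Type*} [CommSemiring R] [Semiring A] [HopfAlgebra R A]

lemma comp_antipode_mul_self {B : Type*} [Semiring B] [Algebra R B] (f : A →ₐ[R] B) :
    toConv (f.toLinearMap ∘ₗ antipode R) * toConv f.toLinearMap = 1 := by
  have := LinearMap.algHom_comp_convMul_distrib f (toConv (antipode R)) (toConv LinearMap.id)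
  rw [LinearMap.antipode_mul_id] at this
  refine WithConv.ofConv_injective (this.symm.trans ?_)
  ext
  simp

lemma self_mul_antipode_comp {C : Type*} [AddCommMonoid C] [Module R C] [Coalgebra R C]
    (f : C →ₗc[R] A) :
    toConv f.toLinearMap * toConv (antipode R ∘ₗ f.toLinearMap) = 1 := by
  have := LinearMap.convMul_comp_coalgHom_distrib (toConv LinearMap.id) (toConv (antipode R)) f
  rw [LinearMap.id_mul_antipode] at this
  refine WithConv.ofConv_injective (this.symm.trans ?_)
  ext
  simp

lemma map_antipode {B : Type*} [Semiring B] [HopfAlgebra R B] (f : A →ₐc[R] B) (x : A) :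
    f (antipode R x) = antipode R (f x) :=
  congr($(left_inv_eq_right_inv (comp_antipode_mul_self (f : A →ₐ[R] B))
    (self_mul_antipode_comp (f : A →ₗc[R] B))) x)

lemma ker_le_comap_antipode {B : Type*} [Semiring B] [HopfAlgebra R B] (f : A →ₐc[R] B) :
    LinearMap.ker (f : A →ₗ[R] B) ≤ (LinearMap.ker (f : A →ₗ[R] B)).comap (antipode R) :=
  fun x (hx : f x = 0) ↦ (map_antipode f x).trans (by rw [hx, map_zero])

lemma comul_antipode (x : A) : comul (R := R) (antipode R x) =
    TensorProduct.map (antipode R) (antipode R) (TensorProduct.comm R A A (comul x)) := by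
  let i₁ : A →ₐ[R] A ⊗[R] A := Algebra.TensorProduct.includeLeft
  let i₂ : A →ₐ[R] A ⊗[R] A := Algebra.TensorProduct.includeRight
  let revComul : WithConv (A →ₗ[R] A ⊗[R] A) :=
    toConv (i₂.toLinearMap ∘ₗ antipode R) * toConv (i₁.toLinearMap ∘ₗ antipode R)
  have comul_eq : toConv i₁.toLinearMap * toConv i₂.toLinearMap = toConv (comul (R := R)) := by
    ext x
    rw [(ℛ R x).convMul_apply]
    simp [i₁, i₂, (ℛ R x).eq]
  have revComul_apply : revComul.ofConv x =
      TensorProduct.map (antipode R) (antipode R) (TensorProduct.comm R A A (comul x)) := by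
    rw [(ℛ R x).convMul_apply]
    simp [i₁, i₂, ← (ℛ R x).eq]
  have left_inv : revComul * toConv (comul (R := R)) = 1 := by
    rw [← comul_eq, mul_assoc, ← mul_assoc _ (toConv i₁.toLinearMap), comp_antipode_mul_self,
      one_mul, comp_antipode_mul_self]
  rw [← revComul_apply]
  exact congr($(left_inv_eq_right_inv left_inv LinearMap.comul_right_inv) x).symm

lemma rightHit_antipode (f : A →ₗ[R] R) (x : A) :
    rightHit f (antipode R x) = antipode R (leftHit (f ∘ₗ antipode R) x) := by
  rw [rightHit_apply, comul_antipode, lid_rTensor_map, LinearMap.rTensor_comm,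
    TensorProduct.lid_comm, ← leftHit_apply]

end Antipode

section Integral

section Bialgebra

variable {R A : Type*} [CommSemiring R] [Semiring A] [Bialgebra R A]

/-- `h` is a right integral on `A`: `h(x₁) x₂ = h(x) 1` for all `x`. Over a field, a Hopf algebra
having one with `h(1) = 1` is cosemisimple, and conversely. -/
def IsRightIntegral (h : A →ₗ[R] R) : Prop :=
  ∀ x, rightHit h x = h x • 1

lemma rightHit_one (f : A →ₗ[R] R) : rightHit f 1 = f 1 • (1 : A) := by
  simp [rightHit, Algebra.TensorProduct.one_def]

lemma rightHit_mul_eq_sum (f : A →ₗ[R] R) (x : A) {y : A} {ι : Type*}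
    (r : Coalgebra.Repr R y ι) :
    rightHit f (x * y) =
      ∑ i ∈ r.index, rightHit (f ∘ₗ LinearMap.mulRight R (r.left i)) x * r.right i := by
  simp only [rightHit_apply, Bialgebra.comul_mul, ← r.eq, Finset.mul_sum, map_sum]
  refine Finset.sum_congr rfl fun i _ ↦ ?_
  generalize comul (R := R) x = t
  induction t with
  | zero => simp
  | add s t hs ht => simp only [add_mul, map_add, hs, ht]
  | tmul a b => simp

end Bialgebra

variable {R A : Type*} [CommSemiring R] [Semiring A] [HopfAlgebra R A] {h : A →ₗ[R] R}

lemma IsRightIntegral.rightHit_comp_mulRight (hh : IsRightIntegral h) (x y : A) :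
    rightHit (h ∘ₗ LinearMap.mulRight R y) x =
      antipode R (rightHit (h ∘ₗ LinearMap.mulLeft R x) y) := by
  let a : A →ₗ[R] A := ∑ j ∈ (ℛ R x).index,
    (h ∘ₗ LinearMap.mulLeft R ((ℛ R x).left j)).smulRight ((ℛ R x).right j)
  have a_apply (y : A) : a y = rightHit (h ∘ₗ LinearMap.mulRight R y) x := by
    simp [a, rightHit_apply_eq_sum _ (ℛ R x)]
  let b : A →ₗ[R] A := (h ∘ₗ LinearMap.mulLeft R x).smulRight 1
  have a_mul_id : toConv a * toConv LinearMap.id = toConv b := by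
    ext y
    rw [(ℛ R y).convMul_apply]
    simp [a_apply, b, ← rightHit_mul_eq_sum, hh (x * y)]
  have a_eq : toConv a = toConv b * toConv (antipode R) := by
    rw [← a_mul_id, mul_assoc, LinearMap.id_mul_antipode, mul_one]
  rw [← a_apply, rightHit_apply_eq_sum _ (ℛ R y)]
  simpa [b, (ℛ R y).convMul_apply] using congr($a_eq y)

/-- The bilinear form `⟨x, c⟩ = h(x S(c))` attached to a functional `h` on a Hopf algebra. For a
normalized right integral `h` it is nondegenerate on every finite-dimensional subcoalgebra. -/
noncomputable def antipodeForm (h : A →ₗ[R] R) : A →ₗ[R] A →ₗ[R] R :=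
  ((LinearMap.mul R A).compl₂ (antipode R)).compr₂ h

lemma IsRightIntegral.rightHit_antipodeForm_flip (hh : IsRightIntegral h) (x c : A) :
    rightHit ((antipodeForm h).flip c) x =
      antipode R (antipode R (leftHit (antipodeForm h x) c)) :=
  (hh.rightHit_comp_mulRight x (antipode R c)).trans (congrArg _ (rightHit_antipode _ c))

lemma lift_antipodeForm_comul (h : A →ₗ[R] R) (x : A) :
    TensorProduct.lift (antipodeForm h) (comul x) = counit (R := R) x * h 1 := by
  have := congrArg h (mul_antipode_lTensor_comul_apply (R := R) x)
  rw [Algebra.algebraMap_eq_smul_one, map_smul, smul_eq_mul] at this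
  rw [← this]
  generalize comul (R := R) x = t
  induction t with
  | zero => simp
  | add s t hs ht => simp only [map_add, hs, ht]
  | tmul a b => simp [antipodeForm]

end Integral

section Radical

variable {k A : Type u} [Field k] [Ring A] [HopfAlgebra k A] {h : A →ₗ[k] k}
  {D : Submodule k A}

/-- The left radical of the restriction of `antipodeForm h` to `D`, as a subspace of `A`. -/
noncomputable def antipodeRadical (h : A →ₗ[k] k) (D : Submodule k A) : Submodule k A :=
  D ⊓ D.dualAnnihilator.comap (antipodeForm h)

lemma mem_antipodeRadical {x : A} :
    x ∈ antipodeRadical h D ↔ x ∈ D ∧ ∀ c ∈ D, antipodeForm h x c = 0 := by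
  simp [antipodeRadical, Submodule.mem_dualAnnihilator]

lemma rightHit_antipodeForm_flip_eq_zero (hh : IsRightIntegral h) (hD : IsSubcoalgebra k A D)
    {x c : A} (hx : x ∈ antipodeRadical h D) (hc : c ∈ D) :
    rightHit ((antipodeForm h).flip c) x = 0 := by
  have hit_zero : leftHit (antipodeForm h x) c = 0 := by
    rw [hD.leftHit_congr (g := 0) (mem_antipodeRadical.1 hx).2 hc]
    simp [leftHit]
  rw [hh.rightHit_antipodeForm_flip, hit_zero, map_zero, map_zero]

lemma leftHit_mem_antipodeRadical (hh : IsRightIntegral h) (hD : IsSubcoalgebra k A D)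
    (f : A →ₗ[k] k) {x : A} (hx : x ∈ antipodeRadical h D) :
    leftHit f x ∈ antipodeRadical h D := by
  refine mem_antipodeRadical.2 ⟨hD.leftHit_mem f hx.1, fun c hc ↦ ?_⟩
  rw [← LinearMap.flip_apply, apply_leftHit,
    rightHit_antipodeForm_flip_eq_zero hh hD hx hc, map_zero]

lemma counit_eq_zero_of_mem_antipodeRadical (hh : IsRightIntegral h) (h_one : h 1 = 1)
    (hD : IsSubcoalgebra k A D) {x : A} (hx : x ∈ antipodeRadical h D) :
    counit (R := k) x = 0 := by
  obtain ⟨t, ht⟩ : comul x ∈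
      LinearMap.range (TensorProduct.map (antipodeRadical h D).subtype D.subtype) :=
    mem_range_map_subtype (fun g ↦ leftHit_mem_antipodeRadical hh hD g hx)
      (fun f ↦ hD.rightHit_mem f hx.1)
  have lift_eq_zero : TensorProduct.lift (antipodeForm h) ∘ₗ
      TensorProduct.map (antipodeRadical h D).subtype D.subtype = 0 :=
    TensorProduct.ext' fun a c ↦ (mem_antipodeRadical.1 a.2).2 c c.2
  rw [← mul_one (counit x), ← h_one, ← lift_antipodeForm_comul, ← ht]
  exact congr($lift_eq_zero t)

lemma antipodeRadical_eq_bot (hh : IsRightIntegral h) (h_one : h 1 = 1)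
    (hD : IsSubcoalgebra k A D) : antipodeRadical h D = ⊥ := by
  refine (Submodule.eq_bot_iff _).2 fun x hx ↦ ?_
  refine (Module.forall_dual_apply_eq_zero_iff k x).1 fun f ↦ ?_
  rw [← rightHit_counit (R := k) x, ← apply_leftHit]
  exact counit_eq_zero_of_mem_antipodeRadical hh h_one hD
    (leftHit_mem_antipodeRadical hh hD f hx)

lemma exists_antipodeForm_eqOn (hh : IsRightIntegral h) (h_one : h 1 = 1)
    (hD : IsSubcoalgebra k A D) [FiniteDimensional k D] (φ : A →ₗ[k] k) :
    ∃ e ∈ D, Set.EqOn (antipodeForm h e) φ D := by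
  let B : D →ₗ[k] Module.Dual k D := (antipodeForm h).domRestrict₁₂ D D
  have B_injective : Function.Injective B := by
    refine (injective_iff_map_eq_zero B).2 fun x hx ↦ ?_
    have : (x : A) ∈ antipodeRadical h D :=
      mem_antipodeRadical.2 ⟨x.2, fun c hc ↦ congr($hx ⟨c, hc⟩)⟩
    rwa [antipodeRadical_eq_bot hh h_one hD, Submodule.mem_bot, Submodule.coe_eq_zero] at this
  have B_surjective : Function.Surjective B :=
    (LinearMap.injective_iff_surjective_of_finrank_eq_finrank
      Subspace.dual_finrank_eq.symm).1 B_injective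
  obtain ⟨e, he⟩ := B_surjective (φ ∘ₗ D.subtype)
  exact ⟨e, e.2, fun c hc ↦ congr($he ⟨c, hc⟩)⟩

end Radical

section AntipodeBijectivity

variable {k A : Type u} [Field k] [Ring A] [HopfAlgebra k A] {h : A →ₗ[k] k}

lemma antipode_injective (hh : IsRightIntegral h) (h_one : h 1 = 1) :
    Function.Injective (antipode k (A := A)) := by
  refine (injective_iff_map_eq_zero _).2 fun c hc ↦ ?_
  obtain ⟨D, _, hcD, hD⟩ := exists_finiteDimensional_isSubcoalgebra (k := k) c
  refine (Module.forall_dual_apply_eq_zero_iff k c).1 fun φ ↦ ?_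
  obtain ⟨e, -, he⟩ := exists_antipodeForm_eqOn hh h_one hD φ
  simp [← he hcD, antipodeForm, hc]

lemma IsSubcoalgebra.antipode_antipode_mem {D : Submodule k A} (hD : IsSubcoalgebra k A D)
    [FiniteDimensional k D] (hh : IsRightIntegral h) (h_one : h 1 = 1) {c : A} (hc : c ∈ D) :
    antipode k (antipode k c) ∈ D := by
  obtain ⟨e, heD, he⟩ := exists_antipodeForm_eqOn hh h_one hD counit
  have : rightHit ((antipodeForm h).flip c) e = antipode k (antipode k c) := by
    rw [hh.rightHit_antipodeForm_flip, hD.leftHit_congr he hc, leftHit_counit]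
  exact this ▸ hD.rightHit_mem _ heD

lemma map_antipode_eq_self (hh : IsRightIntegral h) (h_one : h 1 = 1) {K : Submodule k A}
    (hK : K ≤ K.comap (antipode k)) : K.map (antipode k) = K := by
  refine le_antisymm (Submodule.map_le_iff_le_comap.2 hK) fun x hx ↦ ?_
  obtain ⟨D, _, hxD, hD⟩ := exists_finiteDimensional_isSubcoalgebra (k := k) x
  have : FiniteDimensional k (K ⊓ D : Submodule k A) :=
    Submodule.finiteDimensional_of_le inf_le_right
  let antipodeSq : (K ⊓ D : Submodule k A) →ₗ[k] (K ⊓ D : Submodule k A) :=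
    (antipode k ∘ₗ antipode k).restrict fun y hy ↦
      ⟨hK (hK hy.1), hD.antipode_antipode_mem hh h_one hy.2⟩
  have antipodeSq_injective : Function.Injective antipodeSq := fun a b hab ↦
    Subtype.ext <| antipode_injective hh h_one <| antipode_injective hh h_one congr(($hab : A))
  obtain ⟨y, hy⟩ := LinearMap.injective_iff_surjective.1 antipodeSq_injective ⟨x, hx, hxD⟩
  exact ⟨antipode k (y : A), hK y.2.1, congr(($hy : A))⟩

end AntipodeBijectivity

section Comodule

variable {k C V : Type u} [Field k] [AddCommGroup C] [Module k C] [AddCommGroup V]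
  [Module k V] {ρ : V →ₗ[k] V ⊗[k] C}

lemma isSubcomod_iSup {ι : Sort*} {U : ι → Submodule k V} (hU : ∀ i, IsSubcomod k C ρ (U i)) :
    IsSubcomod k C ρ (⨆ i, U i) := by
  suffices ⨆ i, U i ≤ (LinearMap.range ((⨆ i, U i).subtype.rTensor C)).comap ρ from this
  refine iSup_le fun i x hx ↦ ?_
  obtain ⟨t, ht⟩ := hU i x hx
  refine ⟨(Submodule.inclusion (le_iSup U i)).rTensor C t, ?_⟩
  rw [← ht, ← LinearMap.rTensor_comp_apply, Submodule.subtype_comp_inclusion]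

lemma IsSubcomod.isComodHom_projection {U W : Submodule k V} (hU : IsSubcomod k C ρ U)
    (hW : IsSubcomod k C ρ W) (hUW : IsCompl U W) :
    IsComodHom k C ρ ρ (U.projection W hUW) := by
  have on_U {u : V} (hu : u ∈ U) : (U.projection W hUW).rTensor C (ρ u) = ρ u := by
    obtain ⟨t, ht⟩ := hU u hu
    have : U.projection W hUW ∘ₗ U.subtype = U.subtype := by ext; simp
    rw [← ht, ← LinearMap.rTensor_comp_apply, this]
  have on_W {w : V} (hw : w ∈ W) : (U.projection W hUW).rTensor C (ρ w) = 0 := by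
    obtain ⟨t, ht⟩ := hW w hw
    have : U.projection W hUW ∘ₗ W.subtype = 0 := by ext; simp
    rw [← ht, ← LinearMap.rTensor_comp_apply, this, LinearMap.rTensor_zero, LinearMap.zero_apply]
  ext x
  obtain ⟨u, hu, w, hw, rfl⟩ := Submodule.mem_sup.1 (hUW.sup_eq_top ▸ Submodule.mem_top (x := x))
  simp [on_U hu, on_W hw, Submodule.projection_apply_of_mem_left hUW hu,
    (Submodule.projection_apply_eq_zero_iff hUW).2 hw]

variable [Coalgebra k C]

lemma isComod_comul : IsComod k C (comul (R := k) (A := C)) where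
  coassoc x := (coassoc_symm_apply x).symm
  counit x := by simp

lemma IsComodHom.apply_eq_rightHit {p : C →ₗ[k] C} (hp : IsComodHom k C comul comul p) (x : C) :
    p x = rightHit (counit ∘ₗ p) x := by
  have comul_p : comul (p x) = p.rTensor C (comul x) := congr($hp x)
  rw [← rightHit_counit (R := k) (p x), rightHit_apply, comul_p, ← LinearMap.rTensor_comp_apply,
    ← rightHit_apply]

end Comodule

lemma exists_notMem_iSup_ne {R M ι : Type*} [Ring R] [AddCommGroup M] [Module R M]
    {U : ι → Submodule R M} (hind : iSupIndep U) (htop : ⨆ i, U i = ⊤) {x : M} (hx : x ≠ 0) :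
    ∃ i, x ∉ ⨆ (j) (_ : j ≠ i), U j := by
  classical
  let := (DirectSum.isInternal_submodule_of_iSupIndep_of_iSup_eq_top
    hind htop).chooseDecomposition
  contrapose! hx
  have component_eq_zero (i : ι) : DirectSum.decompose U x i = 0 := by
    let component := DirectSum.component R ι (fun i ↦ U i) i ∘ₗ
      (DirectSum.decomposeLinearEquiv U).toLinearMap
    suffices ⨆ (j) (_ : j ≠ i), U j ≤ LinearMap.ker component from this (hx i)
    refine iSup₂_le fun j hj y hy ↦ Subtype.ext ?_
    exact DirectSum.decompose_of_mem_ne U hy hj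
  exact (DirectSum.decompose U).injective (by ext i; simp [component_eq_zero i])

lemma IsCosemisimple.exists_isSimpleSubcomod_isCompl {k C V : Type u} [Field k] [AddCommGroup C]
    [Module k C] [Coalgebra k C] [AddCommGroup V] [Module k V] {ρ : V →ₗ[k] V ⊗[k] C}
    (hC : IsCosemisimple k C) (hρ : IsComod k C ρ) {x : V} (hx : x ≠ 0) :
    ∃ U W : Submodule k V,
      IsSimpleSubcomod k C ρ U ∧ IsSubcomod k C ρ W ∧ IsCompl U W ∧ x ∉ W := by
  obtain ⟨ι, U, hU, hind, htop⟩ := hC V ρ hρ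
  obtain ⟨i, hi⟩ := exists_notMem_iSup_ne hind htop hx
  refine ⟨U i, ⨆ (j) (_ : j ≠ i), U j, hU i,
    isSubcomod_iSup fun j ↦ isSubcomod_iSup fun _ ↦ (hU j).1, ⟨hind i, ?_⟩, hi⟩
  rw [codisjoint_iff, ← iSup_split_single U i, htop]

section ExistsIntegral

variable {k A : Type u} [Field k] [Ring A] [Bialgebra k A]

lemma isSubcomod_span_one : IsSubcomod k A comul (Submodule.span k {(1 : A)}) := by
  rintro _ hx
  obtain ⟨c, rfl⟩ := Submodule.mem_span_singleton.1 hx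
  refine ⟨(⟨c • 1, hx⟩ : Submodule.span k {(1 : A)}) ⊗ₜ 1, ?_⟩
  simp [Algebra.TensorProduct.one_def, TensorProduct.smul_tmul']

lemma IsCosemisimple.exists_isRightIntegral (hA : IsCosemisimple k A) :
    ∃ h : A →ₗ[k] k, IsRightIntegral h ∧ h 1 = 1 := by
  have : Nontrivial A := (Bialgebra.counitAlgHom k A).toRingHom.domain_nontrivial
  obtain ⟨U, W, hU, hW, hUW, one_notMem⟩ :=
    hA.exists_isSimpleSubcomod_isCompl isComod_comul (one_ne_zero (α := A))
  let p := U.projection W hUW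
  have p_eq (x : A) : p x = rightHit (counit ∘ₗ p) x :=
    (hU.1.isComodHom_projection hW hUW).apply_eq_rightHit x
  have p_one : p 1 = counit (R := k) (p 1) • (1 : A) := (p_eq 1).trans (rightHit_one _)
  have one_mem : (1 : A) ∈ U := by
    have counit_ne_zero : counit (R := k) (p 1) ≠ 0 := fun h0 ↦ one_notMem <|
      (Submodule.projection_apply_eq_zero_iff hUW).1 (by rw [p_one, h0, zero_smul])
    rw [← Submodule.smul_mem_iff U counit_ne_zero, ← p_one]
    exact Submodule.projection_apply_mem hUW 1
  have span_one : Submodule.span k {(1 : A)} = U :=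
    (hU.2.2 _ (by simpa using one_mem) isSubcomod_span_one).resolve_left (by simp)
  refine ⟨counit ∘ₗ p, fun x ↦ ?_, ?_⟩
  · obtain ⟨c, hc⟩ : ∃ c : k, c • (1 : A) = p x := by
      rw [← Submodule.mem_span_singleton, span_one]
      exact Submodule.projection_apply_mem hUW x
    rw [← p_eq, LinearMap.comp_apply, ← hc]
    simp
  · simp [p, Submodule.projection_apply_of_mem_left hUW one_mem]

end ExistsIntegral

section Normality

variable {k : Type u} [Field k]

lemma adR_antipode {A : Type u} [Ring A] [HopfAlgebra k A] (x : A) :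
    adR k A (antipode k x) =
      TensorProduct.comm k A A (TensorProduct.map (antipode k) (antipode k) (adL k A x)) := by
  simp only [adR, adL, comul2, LinearMap.comp_apply, comul_antipode, ← coassoc_apply]
  generalize comul (R := k) x = t
  induction t with
  | zero => simp
  | add s t hs ht => simp only [map_add, hs, ht]
  | tmul a b =>
    simp only [TensorProduct.comm_tmul, TensorProduct.map_tmul, LinearMap.lTensor_tmul,
      LinearMap.rTensor_tmul, comul_antipode]
    generalize comul (R := k) a = t
    induction t with
    | zero => simp
    | add s t hs ht => simp only [TensorProduct.tmul_add, TensorProduct.add_tmul, map_add, hs, ht]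
    | tmul c d => simp [antipode_mul_antidistrib]

lemma exists_comp_eq_iff_ker_le_ker {R L M N : Type*} [Ring R] [AddCommGroup L] [Module R L]
    [AddCommGroup M] [Module R M] [AddCommGroup N] [Module R N] {p : L →ₗ[R] M}
    (hp : Function.Surjective p) {f : L →ₗ[R] N} :
    (∃ g : M →ₗ[R] N, g ∘ₗ p = f) ↔ LinearMap.ker p ≤ LinearMap.ker f := by
  refine ⟨?_, fun hle ↦ ⟨(LinearMap.ker p).liftQ f hle ∘ₗ
    (p.quotKerEquivOfSurjective hp).symm.toLinearMap, LinearMap.ext fun x ↦ ?_⟩⟩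
  · rintro ⟨g, rfl⟩
    exact LinearMap.ker_le_ker_comp p g
  · simp [LinearMap.quotKerEquivOfSurjective_symm_apply]

variable {A B : Type u} [Ring A] [HopfAlgebra k A] [Ring B] [HopfAlgebra k B] {π : A →ₐc[k] B}

lemma antipode_injective_of_surjective (hsurj : Function.Surjective π)
    (hS : Function.Injective (antipode k (A := A)))
    (hker : (LinearMap.ker (π : A →ₗ[k] B)).map (antipode k) = LinearMap.ker (π : A →ₗ[k] B)) :
    Function.Injective (antipode k (A := B)) := by
  refine (injective_iff_map_eq_zero _).2 fun y hy ↦ ?_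
  obtain ⟨x, rfl⟩ := hsurj y
  have : antipode k x ∈ (LinearMap.ker (π : A →ₗ[k] B)).map (antipode k) := by
    rw [hker]
    exact (map_antipode π x).trans hy
  obtain ⟨z, hz, hzx⟩ := this
  exact hS hzx ▸ hz

lemma rTensor_adR_antipode (π : A →ₐc[k] B) (x : A) :
    (π : A →ₗ[k] B).rTensor A (adR k A (antipode k x)) =
      TensorProduct.comm k A B (TensorProduct.map (antipode k) (antipode k)
        ((π : A →ₗ[k] B).lTensor A (adL k A x))) := by
  rw [adR_antipode]
  generalize adL k A x = t
  induction t with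
  | zero => simp
  | add s t hs ht => simp only [map_add, hs, ht]
  | tmul a b => simp [map_antipode]

lemma isLeftNormal_iff_isRightNormal (hsurj : Function.Surjective π)
    (hS : Function.Injective (antipode k (A := A)))
    (hker : (LinearMap.ker (π : A →ₗ[k] B)).map (antipode k) = LinearMap.ker (π : A →ₗ[k] B)) :
    IsLeftNormal k A (π : A →ₗ[k] B) ↔ IsRightNormal k A (π : A →ₗ[k] B) := by
  have map_antipode_injective : Function.Injective
      (TensorProduct.map (antipode k (A := A)) (antipode k (A := B))) :=
    TensorProduct.map_injective_of_flat_flat _ _ hS (antipode_injective_of_surjective hsurj hS hker)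
  have adL_eq_zero_iff (x : A) : (π : A →ₗ[k] B).lTensor A (adL k A x) = 0 ↔
      (π : A →ₗ[k] B).rTensor A (adR k A (antipode k x)) = 0 := by
    rw [rTensor_adR_antipode, LinearEquiv.map_eq_zero_iff,
      map_eq_zero_iff _ map_antipode_injective]
  have π_surjective : Function.Surjective (π : A →ₗ[k] B) := hsurj
  rw [IsLeftNormal, IsRightNormal, exists_comp_eq_iff_ker_le_ker π_surjective,
    exists_comp_eq_iff_ker_le_ker π_surjective]
  let K := LinearMap.ker (π : A →ₗ[k] B)
  let L := LinearMap.ker ((π : A →ₗ[k] B).lTensor A ∘ₗ adL k A)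
  let R := LinearMap.ker ((π : A →ₗ[k] B).rTensor A ∘ₗ adR k A)
  calc K ≤ L
    _ ↔ K ≤ R.comap (antipode k) := forall₂_congr fun x _ ↦ adL_eq_zero_iff x
    _ ↔ K.map (antipode k) ≤ R := Submodule.map_le_iff_le_comap.symm
    _ ↔ K ≤ R := by rw [hker]

end Normality

end QG

open QG HopfAlgebra in
theorem statement_3_general (k : Type u) [Field k]
    (G H : Type u) [Ring G] [HopfAlgebra k G] [Ring H] [HopfAlgebra k H]
    (π : G →ₐc[k] H) (hsurj : Function.Surjective π)
    (hcss : IsCosemisimple k G) :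
    (LinearMap.ker (π : G →ₗ[k] H)).map (antipode (R := k) (A := G)) =
      LinearMap.ker (π : G →ₗ[k] H) ∧
    (IsLeftNormal k G (π : G →ₗ[k] H) ↔ IsRightNormal k G (π : G →ₗ[k] H)) := by
  obtain ⟨h, hh, h_one⟩ := hcss.exists_isRightIntegral
  have map_ker := map_antipode_eq_self hh h_one (ker_le_comap_antipode π)
  exact ⟨map_ker, isLeftNormal_iff_isRightNormal hsurj (antipode_injective hh h_one) map_ker⟩

open QG HopfAlgebra in
/-- If `π : O(G) → O(H)` is a surjective morphism of Hopf
algebras with `O(G)` cosemisimple, then the antipode `S` of `O(G)` satisfies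
`S(ker π) = ker π`, and `π` is left-normal iff it is right-normal. -/
theorem statement_3 (k : Type u) [Field k] [IsAlgClosed k]
    (G H : Type u) [Ring G] [HopfAlgebra k G] [Ring H] [HopfAlgebra k H]
    (π : G →ₐc[k] H) (hsurj : Function.Surjective π)
    (hcss : IsCosemisimple k G) :
    (LinearMap.ker (π : G →ₗ[k] H)).map (antipode (R := k) (A := G)) =
      LinearMap.ker (π : G →ₗ[k] H) ∧
    (IsLeftNormal k G (π : G →ₗ[k] H) ↔ IsRightNormal k G (π : G →ₗ[k] H)) :=
  statement_3_general k G H π hsurj hcss
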